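/- Fix t > 0, x₀ ∈ ℝ, μ ∈ ℝ, σ > 0 with x₀ ≠ μ. For each θ > 0 let γ_θ be the Gaussian probability measure on ℝ with mean m_t = x₀·e^{−θt} + μ·(1 − e^{−θt}) and variance σ_t² = (σ²/(2θ))·(1 − e^{−2θt}). Then there exists a family (Z_θ)_{θ>0} of pairwise disjoint Borel subsets of ℝ^ℕ such that γ_θ^ℕ(Z_θ) = 1 for every θ > 0; that is, the family (γ_θ^ℕ)_{θ>0} is strictly separated. -/

import Mathlib

/-!
The laws `γ_θ` have pairwise distinct means, since `m_θ = μ + (x₀ - μ) exp (-θ t)` with `x₀ ≠ μ`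
and `t ≠ 0` is injective in `θ`. By the strong law of large numbers
(`IsCountableProductOf.ae_tendsto_average`), under `γ_θ^ℕ` the running averages of the coordinates
converge almost surely to `m_θ`. So one may take for `Z θ` the Borel set of sequences whose running
averages converge to `m_θ`; these sets are disjoint by uniqueness of limits.
-/

open MeasureTheory ProbabilityTheory Filter Real

/-- `P` is the countable product measure `ν^ℕ` on `ℕ → ℝ` of the Borel probability
measure `ν` on `ℝ`: it is a probability measure whose finite-dimensional cylinder
marginals are products of `ν`. -/
def IsCountableProductOf (P : Measure (ℕ → ℝ)) (ν : Measure ℝ) : Prop :=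
  IsProbabilityMeasure P ∧
    ∀ (s : Finset ℕ) (B : ℕ → Set ℝ), (∀ i ∈ s, MeasurableSet (B i)) →
      P {z : ℕ → ℝ | ∀ i ∈ s, z i ∈ B i} = ∏ i ∈ s, ν (B i)

/-- The two descriptions of the countable product agree, so that Mathlib's results on
`Measure.infinitePi` become available. -/
lemma IsCountableProductOf.eq_infinitePi {P : Measure (ℕ → ℝ)} {ν : Measure ℝ}
    [IsProbabilityMeasure ν] (h : IsCountableProductOf P ν) :
    P = Measure.infinitePi (fun _ : ℕ => ν) :=
  Measure.eq_infinitePi _ fun s B hB => h.2 s B fun i _ => hB i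

/-- Strong law of large numbers for the coordinates on `ℝ^ℕ` under a product of Gaussians. -/
lemma IsCountableProductOf.ae_tendsto_average {P : Measure (ℕ → ℝ)} {m : ℝ} {v : NNReal}
    (h : IsCountableProductOf P (gaussianReal m v)) :
    ∀ᵐ z : ℕ → ℝ ∂P, Tendsto (fun n : ℕ => (∑ i ∈ Finset.range n, z i) / (n : ℝ)) atTop (nhds m) := by
  rw [h.eq_infinitePi]
  set Q := Measure.infinitePi (fun _ : ℕ => gaussianReal m v)
  have hmap : ∀ i, Q.map (fun z : ℕ → ℝ => z i) = gaussianReal m v :=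
    fun i => Measure.infinitePi_map_eval _ i
  have hint : Integrable (fun z : ℕ → ℝ => z 0) Q := by
    have hid : Integrable (id : ℝ → ℝ) (Q.map fun z : ℕ → ℝ => z 0) := by
      rw [hmap]
      exact (memLp_id_gaussianReal 1).integrable le_rfl
    exact hid.comp_measurable (measurable_pi_apply 0)
  have hind : iIndepFun (fun (i : ℕ) (z : ℕ → ℝ) => z i) Q :=
    iIndepFun_infinitePi (X := fun _ x => x) fun _ => measurable_id
  have hmean : ∫ z : ℕ → ℝ, z 0 ∂Q = m := by
    rw [← integral_map (φ := fun z : ℕ → ℝ => z 0) (f := fun x : ℝ => x)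
      (measurable_pi_apply 0).aemeasurable (by fun_prop), hmap]
    exact integral_id_gaussianReal
  have hslln := strong_law_ae_real (fun (i : ℕ) (z : ℕ → ℝ) => z i) hint
    (fun i j hij => hind.indepFun hij)
    (fun i => ⟨(measurable_pi_apply i).aemeasurable, (measurable_pi_apply 0).aemeasurable,
      by rw [hmap, hmap]⟩)
  rwa [hmean] at hslln

theorem ou_theta_family_strictly_separated
    (t x₀ μ σ : ℝ) (ht : 0 < t) (hσ : 0 < σ) (hx₀μ : x₀ ≠ μ)
    (P : ℝ → Measure (ℕ → ℝ))
    (hP : ∀ θ : ℝ, 0 < θ → IsCountableProductOf (P θ)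
      (gaussianReal (x₀ * Real.exp (-θ * t) + μ * (1 - Real.exp (-θ * t)))
        ((σ ^ 2 / (2 * θ) * (1 - Real.exp (-2 * θ * t))).toNNReal))) :
    ∃ Z : ℝ → Set (ℕ → ℝ),
      (∀ θ : ℝ, 0 < θ → MeasurableSet (Z θ)) ∧
      (∀ θ : ℝ, 0 < θ → P θ (Z θ) = 1) ∧
      (∀ θ₁ θ₂ : ℝ, 0 < θ₁ → 0 < θ₂ → θ₁ ≠ θ₂ →
        Z θ₁ ∩ Z θ₂ = ∅) := by
  let m : ℝ → ℝ := fun θ => x₀ * Real.exp (-θ * t) + μ * (1 - Real.exp (-θ * t))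
  have hm : ∀ θ₁ θ₂, m θ₁ = m θ₂ → θ₁ = θ₂ := by
    intro θ₁ θ₂ h
    have h' : (x₀ - μ) * Real.exp (-θ₁ * t) = (x₀ - μ) * Real.exp (-θ₂ * t) := by
      simp only [m] at h
      linarith
    have he := Real.exp_injective (mul_left_cancel₀ (sub_ne_zero.mpr hx₀μ) h')
    exact neg_injective (mul_right_cancel₀ ht.ne' he)
  have hZ : ∀ θ, MeasurableSet {z : ℕ → ℝ |
      Tendsto (fun n : ℕ => (∑ i ∈ Finset.range n, z i) / (n : ℝ)) atTop (nhds (m θ))} :=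
    fun θ => measurableSet_tendsto (nhds (m θ)) fun n => by fun_prop
  refine ⟨fun θ => {z : ℕ → ℝ |
      Tendsto (fun n : ℕ => (∑ i ∈ Finset.range n, z i) / (n : ℝ)) atTop (nhds (m θ))},
    fun θ _ => hZ θ, fun θ hθ => ?_, fun θ₁ θ₂ _ _ hne => ?_⟩
  · have := (hP θ hθ).1
    exact (mem_ae_iff_prob_eq_one (hZ θ)).mp (hP θ hθ).ae_tendsto_average
  · ext z
    simp only [Set.mem_inter_iff, Set.mem_ofPred_eq, Set.mem_empty_iff_false, iff_false, not_and]
    exact fun h₁ h₂ => hne (hm θ₁ θ₂ (tendsto_nhds_unique h₁ h₂))
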